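/- Let L ≥ 1 and 0 < P_I ≤ P_s be real numbers and z > 0 a real number. Set b := P_s − P_I + L·P_I + L·(P_I + P_s)·z and D := b² − 4·L²·P_I·P_s·z·(z+1). Then D ≥ 0, and the number S := (b − √D)/(2·L·P_I·P_s·z) satisfies the quadratic equation L·P_I·P_s·z·S² − b·S + L·(1 + z) = 0. Moreover, if P_I = P_s, then S = 1/P_s. -/

import Mathlib

/-- Equations (29)–(30): the minus-sign root of the quadratic satisfied by the
S-transform of the two-mass power distribution, with the branch check that a single
mass P_s gives S = 1/P_s. -/
theorem stmt_7 (L P_I P_s z : ℝ) (hL : 1 ≤ L) (hPI : 0 < P_I) (hPIs : P_I ≤ P_s)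
    (hz : 0 < z) :
    letI b : ℝ := P_s - P_I + L * P_I + L * (P_I + P_s) * z
    letI D : ℝ := b ^ 2 - 4 * L ^ 2 * P_I * P_s * z * (z + 1)
    letI S : ℝ := (b - Real.sqrt D) / (2 * L * P_I * P_s * z)
    0 ≤ D ∧
      L * P_I * P_s * z * S ^ 2 - b * S + L * (1 + z) = 0 ∧
      (P_I = P_s → S = 1 / P_s) := by
  have hPs : 0 < P_s := lt_of_lt_of_le hPI hPIs
  have hL0 : 0 < L := by linarith
  have hD : 0 ≤ (P_s - P_I + L * P_I + L * (P_I + P_s) * z) ^ 2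
      - 4 * L ^ 2 * P_I * P_s * z * (z + 1) := by
    have h1 : 0 ≤ L * P_s * z * (P_s - P_I) :=
      mul_nonneg (by positivity) (by linarith)
    nlinarith [sq_nonneg (2 * L * P_s * z
      - (P_s - P_I + L * P_I + L * (P_I + P_s) * z))]
  refine ⟨hD, ?_, ?_⟩
  · have hs := Real.sq_sqrt hD
    generalize hb : P_s - P_I + L * P_I + L * (P_I + P_s) * z = b at *
    generalize Real.sqrt (b ^ 2 - 4 * L ^ 2 * P_I * P_s * z * (z + 1)) = r at *
    field_simp
    linear_combination hs
  · rintro rfl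
    have h2 : (P_I - P_I + L * P_I + L * (P_I + P_I) * z) ^ 2
      - 4 * L ^ 2 * P_I * P_I * z * (z + 1) = (L * P_I) ^ 2 := by ring
    rw [h2, Real.sqrt_sq (by positivity)]
    field_simp
    ring
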